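/- Let I ⊆ S = K[x_1,…,x_n] be a monomial ideal with Ass(S/I) = {P_1,…,P_s} and set d_i = height(P_i). Let I' = (I, x_{n+1}, x_{n+2}) ⊆ S' = S[x_{n+1}, x_{n+2}]. Then sdepth_{S'}(I') ≤ min{ n + 1 − ⌊d_i/2⌋ : 1 ≤ i ≤ s }. -/

import Mathlib

open MvPolynomial

/-- The Stanley space `u·K[Z]` inside the polynomial ring `K[x_i : i ∈ σ]`:
the `K`-span of all monomials `x^(u+v)` with `supp v ⊆ Z`. -/
noncomputable def stanleySpace (K : Type*) [Field K] {σ : Type*} (u : σ →₀ ℕ) (Z : Set σ) :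
    Submodule K (MvPolynomial σ K) :=
  Submodule.span K
    ((fun v : σ →₀ ℕ => (monomial (u + v) (1 : K) : MvPolynomial σ K)) ''
      {v | (v.support : Set σ) ⊆ Z})

/-- `(u, Z)` (indexed by a finite type `ι`) is a Stanley decomposition of the monomial
ideal `I`: the Stanley spaces `x^(u i)·K[Z i]` are independent and their (direct) sum is `I`
as a `K`-vector space.  (Inside the polynomial ring each Stanley space is automatically a
free `K[Z]`-module.) -/
def IsStanleyDecompOfIdeal {K σ : Type*} [Field K] {ι : Type} [Fintype ι]
    (I : Ideal (MvPolynomial σ K)) (u : ι → (σ →₀ ℕ)) (Z : ι → Finset σ) : Prop :=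
  iSupIndep (fun i => stanleySpace K (u i) (Z i)) ∧
    (⨆ i, stanleySpace K (u i) (Z i)) = Submodule.restrictScalars K I

/-- The Stanley depth of a monomial ideal `I`: the largest `d` such that there is a Stanley
decomposition of `I` all of whose Stanley spaces `u_i K[Z_i]` satisfy `|Z_i| ≥ d`. -/
noncomputable def sdepthIdeal {K σ : Type*} [Field K] (I : Ideal (MvPolynomial σ K)) : ℕ :=
  sSup {d | ∃ (ι : Type) (_ : Fintype ι) (_ : Nonempty ι) (u : ι → (σ →₀ ℕ))
    (Z : ι → Finset σ), IsStanleyDecompOfIdeal I u Z ∧ ∀ i, d ≤ (Z i).card}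

/-- `(u, Z)` is a Stanley decomposition of `S/I`:  each Stanley space `x^(u i)·K[Z i]` meets
`I` trivially (equivalently, its image in `S/I` is a free `K[Z i]`-module), the images of the
Stanley spaces in `S/I` are independent, and they sum to `S/I`. -/
def IsStanleyDecompOfQuotient {K σ : Type*} [Field K] {ι : Type} [Fintype ι]
    (I : Ideal (MvPolynomial σ K)) (u : ι → (σ →₀ ℕ)) (Z : ι → Finset σ) : Prop :=
  (∀ i, Disjoint (stanleySpace K (u i) (Z i)) (Submodule.restrictScalars K I)) ∧
    iSupIndep (fun i =>
      (stanleySpace K (u i) (Z i)).map (Ideal.Quotient.mkₐ K I).toLinearMap) ∧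
    (⨆ i, (stanleySpace K (u i) (Z i)).map (Ideal.Quotient.mkₐ K I).toLinearMap) = ⊤

/-- The Stanley depth of `S/I` for a monomial ideal `I`. -/
noncomputable def sdepthQuot {K σ : Type*} [Field K] (I : Ideal (MvPolynomial σ K)) : ℕ :=
  sSup {d | ∃ (ι : Type) (_ : Fintype ι) (_ : Nonempty ι) (u : ι → (σ →₀ ℕ))
    (Z : ι → Finset σ), IsStanleyDecompOfQuotient I u Z ∧ ∀ i, d ≤ (Z i).card}

/-- A monomial ideal: an ideal generated by monomials. -/
def IsMonomialIdeal {K σ : Type*} [Field K] (I : Ideal (MvPolynomial σ K)) : Prop :=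
  ∃ A : Set (σ →₀ ℕ), I = Ideal.span ((fun a => (monomial a (1 : K) : MvPolynomial σ K)) '' A)

/-- The (exponents of the) minimal monomial generators of a monomial ideal `I`:
monomials in `I` that are not proper multiples of monomials in `I`. -/
def minimalGenerators {K σ : Type*} [Field K] (I : Ideal (MvPolynomial σ K)) :
    Set (σ →₀ ℕ) :=
  {a | (monomial a (1 : K) : MvPolynomial σ K) ∈ I ∧
    ∀ b < a, (monomial b (1 : K) : MvPolynomial σ K) ∉ I}

/-- The depth (w.r.t. the maximal graded ideal `m = (x_1,…,x_n)`) of a module `M` over the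
polynomial ring: the maximal length of a regular sequence on `M` consisting of elements
of `m`. -/
noncomputable def mdepth (K σ : Type*) [Field K] (M : Type*) [AddCommGroup M]
    [Module (MvPolynomial σ K) M] : ℕ :=
  sSup {k | ∃ rs : List (MvPolynomial σ K), rs.length = k ∧
    (∀ r ∈ rs, r ∈ Ideal.span (Set.range (X : σ → MvPolynomial σ K))) ∧
    RingTheory.Sequence.IsRegular M rs}

/-- The height of a prime ideal: the height of the corresponding point
of the prime spectrum, i.e. the supremum of lengths of chains of primes below it. -/
noncomputable def primeHt {R : Type*} [CommRing R] (P : Ideal R) (hP : P.IsPrime) : ℕ∞ :=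
  Order.height (⟨P, hP⟩ : PrimeSpectrum R)

/-!
An associated prime `P = (I : f)` is generated by a set of variables `x_j`, `j ∈ F`, and `S` has
a monomial `x^w ∉ I` with `x_j x^w ∈ I` for all `j ∈ F`. In `I' = (I, x_{n+1}, x_{n+2})` the same
`x^w` works for `F' = F ∪ {n+1, n+2}`.

In a Stanley decomposition of `I'`, let `x_j x^w` lie in the piece `i(j)`. These pieces are
distinct, since the generator of a piece containing both `x_j x^w` and `x_k x^w` would divide
`x^w ∉ I'`. If `x_k ∈ Z_{i(j)}` and `x_j ∈ Z_{i(k)}`, then `x_j x_k x^w` lies in both pieces, so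
`j = k`. Averaging over this antisymmetric relation on `F'` gives a piece with
`2 |Z ∩ F'| ≤ |F'| + 1`, hence `|Z| ≤ n + 2 - ⌊|F'| / 2⌋ = n + 1 - ⌊|F| / 2⌋`.
-/

section MonomialIdeals

variable {K σ : Type*} [Field K] {I P : Ideal (MvPolynomial σ K)}

theorem monomial_mem_of_le {a b : σ →₀ ℕ} (ha : monomial a (1 : K) ∈ I) (hab : a ≤ b) (c : K) :
    monomial b c ∈ I := by
  have := I.mul_mem_left (monomial (b - a) c) ha
  rwa [monomial_mul, mul_one, tsub_add_cancel_of_le hab] at this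

theorem mem_of_forall_monomial_mem {p : MvPolynomial σ K}
    (h : ∀ a ∈ p.support, monomial a (1 : K) ∈ I) : p ∈ I := by
  rw [p.as_sum]
  exact I.sum_mem fun a ha => monomial_mem_of_le (h a ha) le_rfl _

theorem isMonomialIdeal_iff :
    IsMonomialIdeal I ↔ ∀ p ∈ I, ∀ a ∈ p.support, monomial a (1 : K) ∈ I := by
  constructor
  · rintro ⟨A, rfl⟩ p hp a ha
    obtain ⟨b, hb, hba⟩ := mem_ideal_span_monomial_image.1 hp a ha
    refine monomial_mem_of_le (a := b) ?_ hba 1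
    exact Ideal.subset_span ⟨b, hb, rfl⟩
  · refine fun h => ⟨{a | monomial a (1 : K) ∈ I}, le_antisymm (fun p hp => ?_) ?_⟩
    · exact mem_ideal_span_monomial_image.2 fun a ha => ⟨a, h p hp a ha, le_rfl⟩
    · rw [Ideal.span_le]
      rintro _ ⟨a, ha, rfl⟩
      exact ha

theorem IsMonomialIdeal.eq_span_X_of_isPrime (hP : IsMonomialIdeal P) (hprime : P.IsPrime) :
    P = Ideal.span (X '' {j | (X j : MvPolynomial σ K) ∈ P}) := by
  refine le_antisymm (fun p hp => mem_ideal_span_X_image.2 fun a ha => ?_) ?_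
  · have hprod := isMonomialIdeal_iff.1 hP p hp a ha
    rw [monomial_eq, C_1, one_mul, Finsupp.prod] at hprod
    obtain ⟨j, hj, hjP⟩ := hprime.prod_mem_iff.1 hprod
    exact ⟨j, hprime.mem_of_pow_mem _ hjP, Finsupp.mem_support_iff.1 hj⟩
  · rw [Ideal.span_le]
    rintro _ ⟨j, hj, rfl⟩
    exact hj

theorem height_span_X_image_le_ncard [Finite σ] (F : Set σ) :
    (Ideal.span (X '' F : Set (MvPolynomial σ K))).height ≤ F.ncard := by
  have hne : Ideal.span (X '' F : Set (MvPolynomial σ K)) ≠ ⊤ := by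
    rw [Ideal.ne_top_iff_one, mem_ideal_span_X_image]
    intro h
    obtain ⟨j, -, hj⟩ := h 0 (by simp)
    exact hj rfl
  refine (Ideal.height_le_spanFinrank _ hne).trans (Nat.cast_le.2 ?_)
  exact (Submodule.spanFinrank_span_le_ncard_of_finite (F.toFinite.image X)).trans
    (Set.ncard_image_le F.toFinite)

end MonomialIdeals

section AssociatedPrimes

variable {K σ : Type*} [Field K] {I P : Ideal (MvPolynomial σ K)}

theorem support_sub_leadingTerm [DecidableEq σ] (m : MonomialOrder σ) (f : MvPolynomial σ K) :
    (f - m.leadingTerm f).support = f.support.erase (m.degree f) := by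
  ext a
  by_cases ha : a = m.degree f
  · simp [ha, MonomialOrder.leadingTerm, MonomialOrder.leadingCoeff]
  · simp [ha, MonomialOrder.leadingTerm, coeff_monomial, Ne.symm ha]

theorem card_support_sub_leadingTerm_lt (m : MonomialOrder σ) {f : MvPolynomial σ K}
    (hf : f ≠ 0) : (f - m.leadingTerm f).support.card < f.support.card := by
  classical
  rw [support_sub_leadingTerm]
  exact Finset.card_erase_lt_of_mem (m.degree_mem_support hf)

theorem card_support_monomial_mul_le (a : σ →₀ ℕ) (f : MvPolynomial σ K) :
    (monomial a (1 : K) * f).support.card ≤ f.support.card := by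
  classical
  calc (monomial a (1 : K) * f).support.card
      ≤ (monomial a (1 : K)).support.card * f.support.card :=
        (Finset.card_le_card (support_mul _ _)).trans Finset.card_add_le
    _ = f.support.card := by simp [support_monomial]

theorem isMonomialIdeal_of_forall_monomial_degree_mem (m : MonomialOrder σ)
    (h : ∀ p ∈ I, p ≠ 0 → monomial (m.degree p) (1 : K) ∈ I) : IsMonomialIdeal I := by
  refine isMonomialIdeal_iff.2 fun p => ?_
  induction hk : p.support.card using Nat.strong_induction_on generalizing p with
  | _ k ih =>
  intro hp a ha
  have hp0 : p ≠ 0 := by rintro rfl; simp at ha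
  by_cases had : a = m.degree p
  · exact had ▸ h p hp hp0
  · have hsub : p - m.leadingTerm p ∈ I :=
      I.sub_mem hp (monomial_mem_of_le (h p hp hp0) le_rfl _)
    classical
    refine ih _ (hk ▸ card_support_sub_leadingTerm_lt m hp0) _ rfl hsub a ?_
    rw [support_sub_leadingTerm]
    exact Finset.mem_erase.2 ⟨had, ha⟩

theorem exists_forall_mem_iff_mul_mem [Finite σ]
    (hP : P ∈ associatedPrimes (MvPolynomial σ K) (MvPolynomial σ K ⧸ I)) :
    ∃ f, ∀ g, g ∈ P ↔ g * f ∈ I := by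
  obtain ⟨-, x, rfl⟩ := isAssociatedPrime_iff.1 hP
  obtain ⟨f, rfl⟩ := Ideal.Quotient.mk_surjective x
  refine ⟨f, fun g => ?_⟩
  rw [Submodule.mem_colon_singleton, Submodule.mem_bot, ← Ideal.Quotient.eq_zero_iff_mem]
  rfl

-- If the leading monomial `x^a` of some `g ∈ P` is not in `P`, then `P = (I : x^a (f - lt f))` as
-- well, and `x^a (f - lt f)` has fewer terms than `f`.
theorem IsMonomialIdeal.of_forall_mem_iff_mul_mem (hI : IsMonomialIdeal I)
    (hP : P.IsPrime) (m : MonomialOrder σ) {f : MvPolynomial σ K} (hf : ∀ g, g ∈ P ↔ g * f ∈ I) :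
    IsMonomialIdeal P := by
  induction hk : f.support.card using Nat.strong_induction_on generalizing f with
  | _ k ih =>
  by_contra hmon
  obtain ⟨g, hg, hg0, ha⟩ : ∃ g ∈ P, g ≠ 0 ∧ monomial (m.degree g) (1 : K) ∉ P := by
    by_contra! h
    exact hmon (isMonomialIdeal_of_forall_monomial_degree_mem m h)
  have hf0 : f ≠ 0 := by
    rintro rfl
    exact hP.ne_top ((Ideal.eq_top_iff_one P).2 ((hf 1).2 (by simp)))
  set a := m.degree g
  have hab : monomial (a + m.degree f) (1 : K) ∈ I := by
    refine isMonomialIdeal_iff.1 hI _ ((hf g).1 hg) _ ?_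
    rw [← m.degree_mul hg0 hf0]
    exact m.degree_mem_support (mul_ne_zero hg0 hf0)
  have hlead : monomial a (1 : K) * m.leadingTerm f ∈ I := by
    rw [MonomialOrder.leadingTerm, monomial_mul]
    exact monomial_mem_of_le hab le_rfl _
  refine hmon (ih _ ?_ (f := monomial a 1 * (f - m.leadingTerm f)) (fun h => ?_) rfl)
  · exact hk ▸ (card_support_monomial_mul_le _ _).trans_lt
      (card_support_sub_leadingTerm_lt m hf0)
  · calc h ∈ P ↔ h * monomial a 1 ∈ P := by simp [hP.mul_mem_iff_mem_or_mem, ha]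
      _ ↔ h * monomial a 1 * f ∈ I := hf _
      _ ↔ h * monomial a 1 * f - h * (monomial a 1 * m.leadingTerm f) ∈ I :=
        (I.sub_mem_iff_left (I.mul_mem_left h hlead)).symm
      _ ↔ h * (monomial a 1 * (f - m.leadingTerm f)) ∈ I := by ring_nf

theorem IsMonomialIdeal.of_mem_associatedPrimes [Finite σ] (hI : IsMonomialIdeal I)
    (hP : P ∈ associatedPrimes (MvPolynomial σ K) (MvPolynomial σ K ⧸ I)) :
    IsMonomialIdeal P := by
  obtain ⟨f, hf⟩ := exists_forall_mem_iff_mul_mem hP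
  obtain ⟨_, -⟩ := exists_wellFoundedLT σ
  exact hI.of_forall_mem_iff_mul_mem hP.isPrime MonomialOrder.lex hf

end AssociatedPrimes

section SocleMonomials

/-- `x^w` represents a nonzero element of `S/I` killed by all the variables `x_j`, `j ∈ F`, that
is, of the socle of `S/I` relative to these variables. For `I` monomial, such a `w` stands in for
an element of `S/I` whose annihilator is the associated prime `(x_j : j ∈ F)`. -/
structure IsSocleMonomial {K σ : Type*} [Field K] (I : Ideal (MvPolynomial σ K)) (F : Set σ)
    (w : σ →₀ ℕ) : Prop where
  notMem : monomial w (1 : K) ∉ I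
  add_single_mem : ∀ j ∈ F, monomial (w + Finsupp.single j 1) (1 : K) ∈ I

/-- The ideal generated by the image of `I` under the renaming `f` of variables together with all
variables outside the range of `f`: for `f` the inclusion of `x_1, …, x_n` into `x_1, …, x_m`, this
is `(I, x_{n+1}, …, x_m)`. -/
noncomputable def adjoinVars {K σ τ : Type*} [Field K] (f : σ → τ)
    (I : Ideal (MvPolynomial σ K)) : Ideal (MvPolynomial τ K) :=
  I.map (rename f).toRingHom ⊔ Ideal.span (X '' (Set.range f)ᶜ)

variable {K σ τ : Type*} [Field K] {I P : Ideal (MvPolynomial σ K)} {F : Set σ} {w : σ →₀ ℕ}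

theorem IsMonomialIdeal.exists_isSocleMonomial [Finite σ] (hI : IsMonomialIdeal I)
    (hP : P ∈ associatedPrimes (MvPolynomial σ K) (MvPolynomial σ K ⧸ I)) :
    ∃ w, IsSocleMonomial I {j | (X j : MvPolynomial σ K) ∈ P} w := by
  obtain ⟨f, hf⟩ := exists_forall_mem_iff_mul_mem hP
  have hfI : f ∉ I := fun h =>
    hP.isPrime.ne_top ((Ideal.eq_top_iff_one P).2 ((hf 1).2 (by rwa [one_mul])))
  obtain ⟨w, hw, hwI⟩ : ∃ w ∈ f.support, monomial w (1 : K) ∉ I := by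
    by_contra! h
    exact hfI (mem_of_forall_monomial_mem h)
  refine ⟨w, hwI, fun j hj => isMonomialIdeal_iff.1 hI _ ((hf (X j)).1 hj) _ ?_⟩
  rwa [mul_comm, mem_support_iff, coeff_mul_X, ← mem_support_iff]

theorem adjoinVars_le_comap_killCompl {f : σ → τ} (hf : f.Injective) :
    adjoinVars f I ≤ I.comap (killCompl hf) := by
  refine sup_le (Ideal.map_le_iff_le_comap.2 fun p hp => ?_) (Ideal.span_le.2 ?_)
  · change killCompl hf (rename f p) ∈ I
    rwa [killCompl_rename_app]
  · rintro _ ⟨j, hj, rfl⟩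
    have : killCompl hf (X j : MvPolynomial τ K) = 0 :=
      killCompl_monomial_eq_zero_of_notMem_range hf 1 (by simp) hj
    simp [this]

theorem IsSocleMonomial.mapDomain_adjoinVars (h : IsSocleMonomial I F w) {f : σ → τ}
    (hf : f.Injective) :
    IsSocleMonomial (adjoinVars f I) (f '' Fᶜ)ᶜ (w.mapDomain f) where
  notMem hmem := h.notMem (by simpa using adjoinVars_le_comap_killCompl hf hmem)
  add_single_mem j hj := by
    by_cases hjf : j ∈ Set.range f
    · obtain ⟨a, rfl⟩ := hjf
      have ha : a ∈ F := by simpa [hf.eq_iff] using hj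
      rw [← Finsupp.mapDomain_single, ← Finsupp.mapDomain_add, ← rename_monomial]
      exact Ideal.mem_sup_left (Ideal.mem_map_of_mem _ (h.add_single_mem a ha))
    · have hX : (X j : MvPolynomial τ K) ∈ adjoinVars f I :=
        Ideal.mem_sup_right (Ideal.subset_span ⟨j, hjf, rfl⟩)
      exact monomial_mem_of_le hX le_add_self 1

end SocleMonomials

section StanleyDecompositions

/-- The exponents of the monomials lying in the Stanley space `x^u K[Z]`. -/
def stanleyExponents {σ : Type*} (u : σ →₀ ℕ) (Z : Set σ) : Set (σ →₀ ℕ) :=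
  {a | u ≤ a ∧ ∀ x ∉ Z, a x = u x}

variable {K σ : Type*} [Field K] {I : Ideal (MvPolynomial σ K)}

theorem stanleyExponents_eq_image (u : σ →₀ ℕ) (Z : Set σ) :
    stanleyExponents u Z = (u + ·) '' {v | (v.support : Set σ) ⊆ Z} := by
  ext a
  constructor
  · rintro ⟨hua, haZ⟩
    refine ⟨a - u, fun x hx => ?_, add_tsub_cancel_of_le hua⟩
    by_contra hxZ
    simp [haZ x hxZ] at hx
  · rintro ⟨v, hv, rfl⟩
    refine ⟨le_self_add, fun x hx => ?_⟩
    simpa using Finsupp.notMem_support_iff.1 fun hxv => hx (hv hxv)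

theorem stanleySpace_eq_restrictSupport (u : σ →₀ ℕ) (Z : Set σ) :
    stanleySpace K u Z = restrictSupport K (stanleyExponents u Z) := by
  rw [restrictSupport_eq_span, stanleyExponents_eq_image, Set.image_image, stanleySpace]

theorem iSup_restrictSupport {ι : Sort*} (s : ι → Set (σ →₀ ℕ)) :
    ⨆ i, restrictSupport K (s i) = restrictSupport K (⋃ i, s i) := by
  simp only [restrictSupport_eq_span, Set.image_iUnion, Submodule.span_iUnion]

theorem add_single_mem_stanleyExponents {u a : σ →₀ ℕ} {Z : Set σ} (ha : a ∈ stanleyExponents u Z)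
    {j : σ} (hj : j ∈ Z) : a + Finsupp.single j 1 ∈ stanleyExponents u Z := by
  refine ⟨ha.1.trans le_self_add, fun x hx => ?_⟩
  have : j ≠ x := by rintro rfl; exact hx hj
  simp [ha.2 x hx, this]

theorem le_of_le_add_single {u w : σ →₀ ℕ} {j k : σ} (hjk : j ≠ k)
    (hj : u ≤ w + Finsupp.single j 1) (hk : u ≤ w + Finsupp.single k 1) : u ≤ w := by
  classical
  intro x
  have hjx := hj x
  have hkx := hk x
  simp only [Finsupp.add_apply, Finsupp.single_apply] at hjx hkx
  grind

theorem exists_two_mul_card_filter_le {α : Type*} {F : Finset α} (hF : F.Nonempty)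
    (r : α → α → Prop) [DecidableRel r]
    (hr : ∀ j ∈ F, ∀ k ∈ F, r j k → r k j → j = k) :
    ∃ j ∈ F, 2 * (F.filter (r j)).card ≤ F.card + 1 := by
  classical
  refine Finset.exists_le_of_sum_le hF (g := fun _ => F.card + 1) ?_
  have hdeg (j : α) (hj : j ∈ F) :
      (F.filter (r j)).card + (F.filter (r · j)).card ≤ F.card + 1 := by
    have hunion : (F.filter (r j) ∪ F.filter (r · j)).card ≤ F.card :=
      Finset.card_le_card (Finset.union_subset (F.filter_subset _) (F.filter_subset _))
    have hinter : (F.filter (r j) ∩ F.filter (r · j)).card ≤ 1 := by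
      refine Finset.card_le_one_iff.2 fun {k l} hk hl => ?_
      simp only [Finset.mem_inter, Finset.mem_filter] at hk hl
      exact (hr j hj k hk.1.1 hk.1.2 hk.2.2).symm.trans (hr j hj l hl.1.1 hl.1.2 hl.2.2)
    rw [← Finset.card_union_add_card_inter]
    lia
  calc ∑ j ∈ F, 2 * (F.filter (r j)).card
      = ∑ j ∈ F, (F.filter (r j)).card + ∑ j ∈ F, (F.filter (r · j)).card := by
        rw [← Finset.mul_sum, two_mul]
        congr 1
        exact Finset.sum_card_bipartiteAbove_eq_sum_card_bipartiteBelow r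
    _ ≤ ∑ _j ∈ F, (F.card + 1) := by
        rw [← Finset.sum_add_distrib]
        exact Finset.sum_le_sum hdeg

namespace IsStanleyDecompOfIdeal

variable {ι : Type} [Fintype ι] {u : ι → σ →₀ ℕ} {Z : ι → Finset σ}

theorem monomial_mem_iff (hD : IsStanleyDecompOfIdeal I u Z) {a : σ →₀ ℕ} :
    monomial a (1 : K) ∈ I ↔ ∃ i, a ∈ stanleyExponents (u i) (Z i) := by
  rw [← Submodule.restrictScalars_mem K I, ← hD.2]
  simp [stanleySpace_eq_restrictSupport, iSup_restrictSupport]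

theorem eq_of_mem_stanleyExponents (hD : IsStanleyDecompOfIdeal I u Z) {a : σ →₀ ℕ} {i j : ι}
    (hi : a ∈ stanleyExponents (u i) (Z i)) (hj : a ∈ stanleyExponents (u j) (Z j)) : i = j := by
  by_contra hij
  have := Submodule.disjoint_def.1 (hD.1.pairwiseDisjoint hij) (monomial a (1 : K))
  simp [stanleySpace_eq_restrictSupport, hi, hj] at this

theorem eq_of_add_single_mem (hD : IsStanleyDecompOfIdeal I u Z) {w : σ →₀ ℕ}
    (hw : monomial w (1 : K) ∉ I) {i : ι} {j k : σ}
    (hj : w + Finsupp.single j 1 ∈ stanleyExponents (u i) (Z i))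
    (hk : w + Finsupp.single k 1 ∈ stanleyExponents (u i) (Z i)) : j = k := by
  by_contra hjk
  have hu : monomial (u i) (1 : K) ∈ I := hD.monomial_mem_iff.2 ⟨i, le_rfl, fun _ _ => rfl⟩
  exact hw (monomial_mem_of_le hu (le_of_le_add_single hjk hj.1 hk.1) 1)

theorem exists_two_mul_card_add_card_le [Fintype σ] (hD : IsStanleyDecompOfIdeal I u Z)
    {F : Finset σ} (hF : F.Nonempty) {w : σ →₀ ℕ} (hw : IsSocleMonomial I F w) :
    ∃ i, 2 * (Z i).card + F.card ≤ 2 * Fintype.card σ + 1 := by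
  classical
  let r (j k : σ) : Prop := ∃ i, w + Finsupp.single j 1 ∈ stanleyExponents (u i) (Z i) ∧ k ∈ Z i
  have hr (j) (_ : j ∈ F) (k) (_ : k ∈ F) (hjk : r j k) (hkj : r k j) : j = k := by
    obtain ⟨i, hji, hki⟩ := hjk
    obtain ⟨i', hki', hji'⟩ := hkj
    have hi := add_single_mem_stanleyExponents hji hki
    have hi' := add_single_mem_stanleyExponents hki' hji'
    obtain rfl := hD.eq_of_mem_stanleyExponents hi (add_right_comm w _ _ ▸ hi')
    exact hD.eq_of_add_single_mem hw.notMem hji hki'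
  obtain ⟨j, hj, hcard⟩ := exists_two_mul_card_filter_le hF r hr
  obtain ⟨i, hi⟩ := hD.monomial_mem_iff.1 (hw.add_single_mem j hj)
  have hsub : (Z i ∩ F).card ≤ (F.filter (r j)).card := Finset.card_le_card fun k hk => by
    rw [Finset.mem_inter] at hk
    exact Finset.mem_filter.2 ⟨hk.2, i, hi, hk.1⟩
  have hinter := Finset.card_inter_add_card_union (Z i) F
  have huniv := (Z i ∪ F).card_le_univ
  exact ⟨i, by lia⟩

end IsStanleyDecompOfIdeal

theorem IsSocleMonomial.sdepthIdeal_le [Finite σ] {F : Set σ} {w : σ →₀ ℕ}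
    (hw : IsSocleMonomial I F w) : sdepthIdeal I ≤ Nat.card σ - F.ncard / 2 := by
  have := Fintype.ofFinite σ
  lift F to Finset σ using F.toFinite
  rw [Set.ncard_coe_finset, Nat.card_eq_fintype_card]
  refine csSup_le' ?_
  rintro q ⟨ι, _, _, u, Z, hD, hq⟩
  rcases F.eq_empty_or_nonempty with rfl | hF
  · simpa using (hq (Classical.arbitrary ι)).trans (Finset.card_le_univ _)
  · obtain ⟨i, hi⟩ := hD.exists_two_mul_card_add_card_le hF hw
    have := hq i
    lia

end StanleyDecompositions

theorem primeHt_eq_height {R : Type*} [CommRing R] (P : Ideal R) (hP : P.IsPrime) :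
    primeHt P hP = P.height :=
  (PrimeSpectrum.height_eq_orderHeight ⟨P, hP⟩).symm

theorem compl_range_castAdd_two (n : ℕ) :
    (Set.range (Fin.castAdd 2 : Fin n → Fin (n + 2)))ᶜ = {Fin.natAdd n 0, Fin.natAdd n 1} := by
  ext j
  simp only [Set.mem_compl_iff, Set.mem_range, Fin.exists_iff, Set.mem_insert_iff,
    Set.mem_singleton_iff, Fin.ext_iff, Fin.val_castAdd, Fin.val_natAdd]
  grind

theorem adjoinVars_castAdd_two {K : Type*} [Field K] {n : ℕ} (I : Ideal (MvPolynomial (Fin n) K)) :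
    adjoinVars (Fin.castAdd 2) I = I.map (rename (Fin.castAdd 2)).toRingHom ⊔
      Ideal.span {X (Fin.natAdd n 0), X (Fin.natAdd n 1)} := by
  rw [adjoinVars, compl_range_castAdd_two, Set.image_pair]

theorem sdepth_extension_le_general {K σ τ : Type*} [Field K] [Finite σ] [Finite τ]
    {f : σ → τ} (hf : f.Injective) {I P : Ideal (MvPolynomial σ K)} (hI : IsMonomialIdeal I)
    (hP : P ∈ associatedPrimes (MvPolynomial σ K) (MvPolynomial σ K ⧸ I))
    {d : ℕ} (hd : primeHt P hP.isPrime = d) :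
    sdepthIdeal (adjoinVars f I) ≤ Nat.card τ - (d + (Nat.card τ - Nat.card σ)) / 2 := by
  set F : Set σ := {j | (X j : MvPolynomial σ K) ∈ P}
  have hdF : d ≤ F.ncard := by
    have := height_span_X_image_le_ncard (K := K) F
    rwa [← (hI.of_mem_associatedPrimes hP).eq_span_X_of_isPrime hP.isPrime,
      ← primeHt_eq_height P hP.isPrime, hd, Nat.cast_le] at this
  obtain ⟨w, hw⟩ := hI.exists_isSocleMonomial hP
  have hsdepth := (hw.mapDomain_adjoinVars hf).sdepthIdeal_le
  have hcard : (f '' Fᶜ)ᶜ.ncard = Nat.card τ - (Nat.card σ - F.ncard) := by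
    rw [Set.ncard_compl, Set.ncard_image_of_injective _ hf, Set.ncard_compl]
  have hFσ := Set.ncard_le_card F
  have hστ := Nat.card_le_card_of_injective f hf
  lia

/-- For `I' = (I, x_{n+1}, x_{n+2}) ⊆ S' = S[x_{n+1}, x_{n+2}]` one has
`sdepth_{S'} I' ≤ min_i (n + 1 - ⌊d_i/2⌋)`, where `d_i` are the heights of the
associated primes of `S/I`. -/
theorem sdepth_extension_le {K : Type*} [Field K] {n s : ℕ}
    (I : Ideal (MvPolynomial (Fin n) K)) (hI : IsMonomialIdeal I)
    (P : Fin s → Ideal (MvPolynomial (Fin n) K))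
    (hAss : associatedPrimes (MvPolynomial (Fin n) K)
      ((MvPolynomial (Fin n) K) ⧸ I) = Set.range P)
    (d : Fin s → ℕ)
    (hd : ∀ i, ∀ h : (P i).IsPrime, primeHt (P i) h = (d i : ℕ∞))
    (I' : Ideal (MvPolynomial (Fin (n + 2)) K))
    (hI' : I' = Ideal.map (rename (Fin.castAdd 2 : Fin n → Fin (n + 2))).toRingHom I ⊔
      Ideal.span {(X (Fin.natAdd n (0 : Fin 2)) : MvPolynomial (Fin (n + 2)) K),
        X (Fin.natAdd n (1 : Fin 2))}) :
    ∀ i, sdepthIdeal I' ≤ n + 1 - d i / 2 := by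
  intro i
  have hPi := hAss.symm ▸ Set.mem_range_self i
  have hle := sdepth_extension_le_general (Fin.castAdd_injective n 2) hI hPi (hd i hPi.isPrime)
  rw [adjoinVars_castAdd_two, ← hI', Nat.card_fin, Nat.card_fin] at hle
  lia
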